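/- Let A be a Hopf algebra over ℂ (not necessarily finite-dimensional) with a triangular structure R and Drinfeld element u. Then for every finite-dimensional A-module V, the trace of the action of u on V is an integer: tr(u|_V) ∈ ℤ. -/

import Mathlib

open TensorProduct

section Defs
variable (k A : Type*) [CommRing k] [Ring A] [HopfAlgebra k A]

/-- The map sending `R ∈ A⊗A` to `R₁₃ ∈ A⊗A⊗A`. -/
noncomputable def R13map : A ⊗[k] A →ₗ[k] A ⊗[k] (A ⊗[k] A) :=
  TensorProduct.map LinearMap.id (TensorProduct.mk k A A 1)

/-- The map sending `R ∈ A⊗A` to `R₁₂ ∈ A⊗A⊗A`. -/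
noncomputable def R12map : A ⊗[k] A →ₗ[k] A ⊗[k] (A ⊗[k] A) :=
  TensorProduct.map LinearMap.id ((TensorProduct.mk k A A).flip 1)

/-- `R` is a quasitriangular structure on the Hopf algebra `A`: `R` is invertible,
`(Δ⊗id)(R) = R₁₃R₂₃`, `(id⊗Δ)(R) = R₁₃R₁₂` and `τ(Δ(a))·R = R·Δ(a)` for all `a`. -/
noncomputable def IsQuasitriangular (R : A ⊗[k] A) : Prop :=
  IsUnit R ∧
  (TensorProduct.assoc k A A A) ((LinearMap.rTensor A (Coalgebra.comul (R := k))) R)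
      = R13map k A R * ((1 : A) ⊗ₜ R) ∧
  (LinearMap.lTensor A (Coalgebra.comul (R := k))) R = R13map k A R * R12map k A R ∧
  ∀ a : A, (TensorProduct.comm k A A) (Coalgebra.comul (R := k) a) * R
      = R * Coalgebra.comul (R := k) a

/-- `R` is a triangular structure on the Hopf algebra `A`: it is quasitriangular
and `R·τ(R) = 1⊗1`. -/
noncomputable def IsTriangular (R : A ⊗[k] A) : Prop :=
  IsQuasitriangular k A R ∧ R * (TensorProduct.comm k A A) R = 1

/-- The Drinfeld element `u = μ∘(S⊗id)(τ(R))` of a quasitriangular Hopf algebra. -/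
noncomputable def drinfeld (R : A ⊗[k] A) : A :=
  LinearMap.mul' k A
    ((TensorProduct.map (HopfAlgebra.antipode (R := k)) LinearMap.id)
      ((TensorProduct.comm k A A) R))

end Defs

/-- The `ℂ`-linear endomorphism of a module given by the action of an element `u ∈ A`. -/
noncomputable def smulLinearMap (A : Type*) [Ring A] [Algebra ℂ A] (u : A)
    (V : Type*) [AddCommGroup V] [Module ℂ V] [Module A V] [IsScalarTower ℂ A V] :
    V →ₗ[ℂ] V where
  toFun v := u • v
  map_add' := smul_add u
  map_smul' c v := by
    show u • c • v = c • (u • v)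
    rw [← algebraMap_smul A c v, ← algebraMap_smul A c (u • v), smul_smul, smul_smul,
      Algebra.commutes]

/-- The Coxeter relations of type `A` for the elements `s i` with `i < N`. -/
structure IsCoxeterFamily {B : Type*} [Ring B] (N : ℕ) (s : ℕ → B) : Prop where
  sq : ∀ i < N, s i * s i = 1
  comm : ∀ i j, i + 1 < j → j < N → s i * s j = s j * s i
  braid : ∀ i, i + 1 < N → s i * s (i + 1) * s i = s (i + 1) * s i * s (i + 1)

section Coxeter

variable {B : Type*} [Ring B] {N : ℕ}

/-- The Jucys–Murphy elements of a Coxeter family. -/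
def jucysMurphy (s : ℕ → B) : ℕ → B
  | 0 => 0
  | k + 1 => s k * jucysMurphy s k * s k + s k

/-- The product `s (m - 1) * ⋯ * s i`. -/
def descProd (s : ℕ → B) : ℕ → ℕ → B
  | 0, _ => 1
  | m + 1, i => if i ≤ m then s m * descProd s m i else 1

/-- The product `s i * ⋯ * s (m - 1)`. -/
def ascProd (s : ℕ → B) : ℕ → ℕ → B
  | 0, _ => 1
  | m + 1, i => if i ≤ m then ascProd s m i * s m else 1

theorem descProd_of_le (s : ℕ → B) {m i : ℕ} (h : m ≤ i) : descProd s m i = 1 := by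
  cases m with
  | zero => rfl
  | succ m => simp [descProd, show ¬ i ≤ m by omega]

theorem ascProd_of_le (s : ℕ → B) {m i : ℕ} (h : m ≤ i) : ascProd s m i = 1 := by
  cases m with
  | zero => rfl
  | succ m => simp [ascProd, show ¬ i ≤ m by omega]

theorem descProd_succ (s : ℕ → B) {m i : ℕ} (h : i ≤ m) :
    descProd s (m + 1) i = s m * descProd s m i := by
  simp [descProd, h]

theorem ascProd_succ (s : ℕ → B) {m i : ℕ} (h : i ≤ m) :
    ascProd s (m + 1) i = ascProd s m i * s m := by
  simp [ascProd, h]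

namespace IsCoxeterFamily

variable {s : ℕ → B}

theorem descProd_mul_ascProd (hs : IsCoxeterFamily N s) {m : ℕ} (hm : m ≤ N) (i : ℕ) :
    descProd s m i * ascProd s m i = 1 := by
  induction m with
  | zero => simp [descProd, ascProd]
  | succ m ih =>
    rcases le_or_gt i m with h | h
    · rw [descProd_succ s h, ascProd_succ s h]
      calc s m * descProd s m i * (ascProd s m i * s m)
          = s m * (descProd s m i * ascProd s m i) * s m := by noncomm_ring
        _ = 1 := by rw [ih (by omega), mul_one, hs.sq m (by omega)]
    · rw [descProd_of_le s h, ascProd_of_le s h, mul_one]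

theorem ascProd_mul_descProd (hs : IsCoxeterFamily N s) {m : ℕ} (hm : m ≤ N) (i : ℕ) :
    ascProd s m i * descProd s m i = 1 := by
  induction m with
  | zero => simp [descProd, ascProd]
  | succ m ih =>
    rcases le_or_gt i m with h | h
    · rw [descProd_succ s h, ascProd_succ s h]
      calc ascProd s m i * s m * (s m * descProd s m i)
          = ascProd s m i * (s m * s m) * descProd s m i := by noncomm_ring
        _ = 1 := by rw [hs.sq m (by omega), mul_one, ih (by omega)]
    · rw [descProd_of_le s h, ascProd_of_le s h, mul_one]

theorem commute_descProd (hs : IsCoxeterFamily N s) {m j : ℕ} (hmj : m < j) (hj : j < N) (i : ℕ) :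
    Commute (s j) (descProd s m i) := by
  induction m with
  | zero => exact Commute.one_right _
  | succ m ih =>
    rcases le_or_gt i m with h | h
    · rw [descProd_succ s h]
      exact Commute.mul_right (hs.comm m j (by omega) hj).symm (ih (by omega))
    · rw [descProd_of_le s h]; exact Commute.one_right _

theorem commute_ascProd (hs : IsCoxeterFamily N s) {m j : ℕ} (hmj : m < j) (hj : j < N) (i : ℕ) :
    Commute (s j) (ascProd s m i) := by
  induction m with
  | zero => exact Commute.one_right _
  | succ m ih =>
    rcases le_or_gt i m with h | h
    · rw [ascProd_succ s h]
      exact Commute.mul_right (ih (by omega)) (hs.comm m j (by omega) hj).symm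
    · rw [ascProd_of_le s h]; exact Commute.one_right _

theorem commute_descProd_of_lt (hs : IsCoxeterFamily N s) {m i j : ℕ} (hji : j + 1 < i)
    (hm : m ≤ N) : Commute (s j) (descProd s m i) := by
  induction m with
  | zero => exact Commute.one_right _
  | succ m ih =>
    rcases le_or_gt i m with h | h
    · rw [descProd_succ s h]
      exact Commute.mul_right (hs.comm j m (by omega) (by omega)) (ih (by omega))
    · rw [descProd_of_le s h]; exact Commute.one_right _

theorem descProd_mul_of_lt (hs : IsCoxeterFamily N s) {m i j : ℕ} (hij : i ≤ j) (hjm : j + 1 < m)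
    (hm : m ≤ N) : descProd s m i * s (j + 1) = s j * descProd s m i := by
  induction m with
  | zero => omega
  | succ m ih =>
    rw [descProd_succ s (by omega : i ≤ m)]
    rcases Nat.lt_or_ge (j + 1) m with h | h
    · rw [mul_assoc, ih h (by omega), ← mul_assoc, ← mul_assoc, hs.comm j m h (by omega)]
    · obtain rfl : m = j + 1 := by omega
      rw [descProd_succ s hij]
      have hc := (hs.commute_descProd (m := j) (j := j + 1) (by omega) (by omega) i).eq
      calc s (j + 1) * (s j * descProd s j i) * s (j + 1)
          = s (j + 1) * s j * (descProd s j i * s (j + 1)) := by noncomm_ring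
        _ = s (j + 1) * s j * s (j + 1) * descProd s j i := by rw [← hc]; noncomm_ring
        _ = s j * (s (j + 1) * (s j * descProd s j i)) := by
            rw [← hs.braid j (by omega)]; noncomm_ring

theorem descProd_mul_self (hs : IsCoxeterFamily N s) {m j : ℕ} (hjm : j < m) (hm : m ≤ N) :
    descProd s m j * s j = descProd s m (j + 1) := by
  induction m with
  | zero => omega
  | succ m ih =>
    rw [descProd_succ s (by omega : j ≤ m)]
    rcases Nat.lt_or_ge j m with h | h
    · rw [mul_assoc, ih h (by omega), descProd_succ s (by omega : j + 1 ≤ m)]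
    · obtain rfl : m = j := by omega
      rw [descProd_of_le s le_rfl, descProd_of_le s le_rfl, mul_one, hs.sq m (by omega)]

/-- The Jucys–Murphy element as a sum of conjugates of `s n`. -/
theorem sum_ascProd_mul_descProd (hs : IsCoxeterFamily N s) {n : ℕ} (hn : n < N) :
    ∑ i ∈ Finset.range (n + 1), ascProd s n i * s n * descProd s n i
      = jucysMurphy s (n + 1) := by
  induction n with
  | zero => simp [ascProd, descProd, jucysMurphy]
  | succ n ih =>
    rw [Finset.sum_range_succ, ascProd_of_le s le_rfl, descProd_of_le s le_rfl, one_mul, mul_one,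
      jucysMurphy, ← ih (by omega), Finset.mul_sum, Finset.sum_mul]
    congr 1
    refine Finset.sum_congr rfl fun i hi => ?_
    have hi : i ≤ n := by simpa [Nat.lt_succ_iff] using hi
    rw [ascProd_succ s hi, descProd_succ s hi]
    have h1 := (hs.commute_ascProd (m := n) (j := n + 1) (by omega) hn i).eq
    have h2 := (hs.commute_descProd (m := n) (j := n + 1) (by omega) hn i).eq
    calc ascProd s n i * s n * s (n + 1) * (s n * descProd s n i)
        = ascProd s n i * (s n * s (n + 1) * s n) * descProd s n i := by noncomm_ring
      _ = (ascProd s n i * s (n + 1)) * s n * (s (n + 1) * descProd s n i) := by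
          rw [hs.braid n hn]; noncomm_ring
      _ = _ := by rw [← h1, h2]; noncomm_ring

theorem commute_jucysMurphy_of_lt (hs : IsCoxeterFamily N s) {k j : ℕ} (hkj : k < j) (hj : j < N) :
    Commute (s j) (jucysMurphy s k) := by
  induction k with
  | zero => exact Commute.zero_right _
  | succ k ih =>
    have h : Commute (s j) (s k) := (hs.comm k j hkj hj).symm
    exact ((h.mul_right (ih (by omega))).mul_right h).add_right h

theorem commute_jucysMurphy (hs : IsCoxeterFamily N s) {k j : ℕ} (hjk : j < k) (hk : k < N) :
    Commute (s j) (jucysMurphy s (k + 1)) := by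
  induction k with
  | zero => omega
  | succ k ih =>
    rcases Nat.lt_or_ge j k with h | h
    · have hc : Commute (s j) (s (k + 1)) := hs.comm j (k + 1) (by omega) hk
      exact ((hc.mul_right (ih h (by omega))).mul_right hc).add_right hc
    · obtain rfl : j = k := by omega
      have hb := hs.braid j hk
      have hJ := (hs.commute_jucysMurphy_of_lt (k := j) (j := j + 1) (by omega) hk).eq
      have h1 := hs.sq j (by omega)
      have h2 := hs.sq (j + 1) hk
      simp only [jucysMurphy, Commute, SemiconjBy]
      generalize jucysMurphy s j = X at *
      generalize s (j + 1) = t at *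
      generalize s j = r at *
      have e1 : r * (t * (r * X * r) * t) = t * (r * X * r) * t * r := by
        calc r * (t * (r * X * r) * t) = (r * t * r) * X * r * t := by noncomm_ring
          _ = t * r * (t * X) * r * t := by rw [hb]; noncomm_ring
          _ = t * r * X * (t * r * t) := by rw [hJ]; noncomm_ring
          _ = _ := by rw [← hb]; noncomm_ring
      have e2 : r * (t * r * t) = t * r := by
        calc r * (t * r * t) = r * t * r * t := by noncomm_ring
          _ = t * r * (t * t) := by rw [hb]; noncomm_ring
          _ = _ := by rw [h2, mul_one]
      have e3 : t * r * t * r = r * t := by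
        rw [← hb, mul_assoc, h1, mul_one]
      calc r * (t * (r * X * r + r) * t + t)
          = r * (t * (r * X * r) * t) + r * (t * r * t) + r * t := by noncomm_ring
        _ = t * (r * X * r) * t * r + t * r * t * r + t * r := by rw [e1, e2, e3]; abel
        _ = _ := by noncomm_ring

theorem commute_jucysMurphy_succ (hs : IsCoxeterFamily N s) {k : ℕ} (hk : k < N) :
    Commute (jucysMurphy s k) (jucysMurphy s (k + 1)) := by
  suffices ∀ j ≤ k, Commute (jucysMurphy s j) (jucysMurphy s (k + 1)) from this k le_rfl
  intro j hj
  induction j with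
  | zero => exact Commute.zero_left _
  | succ j ih =>
    have h := hs.commute_jucysMurphy (j := j) (k := k) (by omega) hk
    exact ((h.mul_left (ih (by omega))).mul_left h).add_left h

/-- The eigenvalues of the Jucys–Murphy elements are integers. -/
theorem eq_zero_of_jucysMurphy_mul_eq_smul [Algebra ℂ B] [FiniteDimensional ℂ B]
    (hs : IsCoxeterFamily N s) {k : ℕ} (hk : k ≤ N) {b : ℂ} (hb : ∀ m : ℤ, b ≠ m) {x : B}
    (hx : jucysMurphy s k * x = b • x) : x = 0 := by
  induction k generalizing b x with
  | zero =>
    have hb0 : b ≠ 0 := by simpa using hb 0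
    have : b • x = 0 := by rw [← hx]; simp [jucysMurphy]
    exact (smul_eq_zero.mp this).resolve_left hb0
  | succ k ih =>
    by_contra hx0
    let f : Module.End ℂ B := LinearMap.mulLeft ℂ (jucysMurphy s (k + 1))
    let g : Module.End ℂ B := LinearMap.mulLeft ℂ (jucysMurphy s k)
    have hfg : Commute f g := by
      ext y
      have := (hs.commute_jucysMurphy_succ (k := k) (by omega)).eq
      simp [f, g, ← mul_assoc, this]
    let K := f.eigenspace b
    have hK : ∀ y ∈ K, g y ∈ K := fun y hy =>
      Module.End.mapsTo_genEigenspace_of_comm hfg b 1 hy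
    have : Nontrivial K := ⟨⟨⟨x, Module.End.mem_eigenspace_iff.mpr hx⟩, 0, fun h => hx0 (by
      simpa using congrArg Subtype.val h)⟩⟩
    obtain ⟨a, ha⟩ := Module.End.exists_eigenvalue (g.restrict hK)
    obtain ⟨⟨v, hvK⟩, hv⟩ := ha.exists_hasEigenvector
    have hv0 : v ≠ 0 := fun h => hv.2 (Subtype.ext h)
    have hga : jucysMurphy s k * v = a • v := congrArg Subtype.val hv.apply_eq_smul
    have hfb : jucysMurphy s (k + 1) * v = b • v := Module.End.mem_eigenspace_iff.mp hvK
    obtain ⟨m, rfl⟩ : ∃ m : ℤ, a = m := by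
      by_contra! h
      exact hv0 (ih (by omega) h hga)
    have hsq := hs.sq k (by omega)
    have hrel : jucysMurphy s k * s k = s k * jucysMurphy s (k + 1) - 1 := by
      simp only [jucysMurphy]
      calc jucysMurphy s k * s k
          = (s k * s k) * jucysMurphy s k * s k + s k * s k - 1 := by rw [hsq]; simp
        _ = _ := by noncomm_ring
    have hbm : b - m ≠ 0 := sub_ne_zero.mpr (hb m)
    have hw : jucysMurphy s k * ((b - m) • (s k * v) - v) = b • ((b - m) • (s k * v) - v) := by
      rw [mul_sub, mul_smul_comm, ← mul_assoc, hrel, sub_mul, mul_assoc, hfb, hga, one_mul,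
        mul_smul_comm]
      module
    have hw0 := ih (by omega) hb hw
    rw [sub_eq_zero] at hw0
    have h2 : (b - m) • v = s k * v := by
      conv_lhs => rw [← one_mul v, ← hsq, mul_assoc, ← mul_smul_comm, hw0]
    rw [← h2, smul_smul] at hw0
    have h3 : ((b - m) * (b - m) - 1) • v = 0 := by rw [sub_smul, hw0, one_smul, sub_self]
    have h4 : (b - m - 1) * (b - m + 1) = 0 := by
      linear_combination (smul_eq_zero.mp h3).resolve_right hv0
    rcases mul_eq_zero.mp h4 with h | h
    · exact hb (m + 1) (by push_cast; linear_combination h)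
    · exact hb (m - 1) (by push_cast; linear_combination h)

end IsCoxeterFamily

end Coxeter

section Markov

variable {B : Type*} [Ring B] [Algebra ℂ B] {N : ℕ} {s : ℕ → B}

/-- The subalgebra generated by `s i` for `i < n`. -/
def coxeterSubalgebra (s : ℕ → B) (n : ℕ) : Subalgebra ℂ B :=
  Algebra.adjoin ℂ (s '' Set.Iio n)

theorem mem_coxeterSubalgebra (s : ℕ → B) {i n : ℕ} (h : i < n) : s i ∈ coxeterSubalgebra s n :=
  Algebra.subset_adjoin ⟨i, h, rfl⟩

theorem coxeterSubalgebra_mono (s : ℕ → B) {m n : ℕ} (h : m ≤ n) :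
    coxeterSubalgebra s m ≤ coxeterSubalgebra s n :=
  Algebra.adjoin_mono (Set.image_mono (Set.Iio_subset_Iio h))

theorem ascProd_mem (s : ℕ → B) (m i : ℕ) : ascProd s m i ∈ coxeterSubalgebra s m := by
  induction m with
  | zero => exact one_mem _
  | succ m ih =>
    rcases le_or_gt i m with h | h
    · rw [ascProd_succ s h]
      exact mul_mem (coxeterSubalgebra_mono s m.le_succ ih) (mem_coxeterSubalgebra s m.lt_succ_self)
    · rw [ascProd_of_le s h]; exact one_mem _

namespace IsCoxeterFamily

theorem exists_descProd_mul (hs : IsCoxeterFamily N s) {n i j : ℕ} (hn : n < N) (hi : i ≤ n + 1)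
    (hj : j ≤ n) : ∃ h ∈ coxeterSubalgebra s n, h * h = 1 ∧
      descProd s (n + 1) i * s j = h * descProd s (n + 1) (Equiv.swap j (j + 1) i) := by
  rcases lt_trichotomy i j with hij | rfl | hij
  · obtain ⟨j, rfl⟩ : ∃ j', j = j' + 1 := ⟨j - 1, by omega⟩
    refine ⟨s j, mem_coxeterSubalgebra s (by omega), hs.sq j (by omega), ?_⟩
    rw [Equiv.swap_apply_of_ne_of_ne (by omega) (by omega),
      hs.descProd_mul_of_lt (by omega) (by omega) (by omega)]
  · refine ⟨1, one_mem _, one_mul _, ?_⟩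
    rw [Equiv.swap_apply_left, one_mul, hs.descProd_mul_self (by omega) (by omega)]
  · rcases eq_or_lt_of_le (Nat.succ_le_of_lt hij) with rfl | hij
    · refine ⟨1, one_mem _, one_mul _, ?_⟩
      rw [Nat.succ_eq_add_one, Equiv.swap_apply_right, one_mul,
        ← hs.descProd_mul_self (by omega) (by omega), mul_assoc, hs.sq j (by omega), mul_one]
    · refine ⟨s j, mem_coxeterSubalgebra s (by omega), hs.sq j (by omega), ?_⟩
      rw [Equiv.swap_apply_of_ne_of_ne (by omega) (by omega),
        (hs.commute_descProd_of_lt (m := n + 1) hij (by omega)).eq]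

theorem map_mul_comm {φ : B →ₗ[ℂ] ℂ} (hcyc : ∀ i < N, ∀ x, φ (s i * x) = φ (x * s i))
    {x : B} (hx : x ∈ coxeterSubalgebra s N) (y : B) : φ (x * y) = φ (y * x) := by
  induction hx using Algebra.adjoin_induction generalizing y with
  | mem x hx => obtain ⟨i, hi, rfl⟩ := hx; exact hcyc i hi y
  | algebraMap r => rw [Algebra.commutes]
  | add a b _ _ ha hb => rw [add_mul, mul_add, map_add, map_add, ha, hb]
  | mul a b _ _ ha hb => rw [mul_assoc, ha, mul_assoc, hb, mul_assoc]

/-- A Markov trace with non-integral parameter is nondegenerate. -/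
theorem eq_zero_of_markov [FiniteDimensional ℂ B] (hs : IsCoxeterFamily N s) {d : ℂ}
    (hd : ∀ m : ℤ, d ≠ m) {φ : B →ₗ[ℂ] ℂ} (hφ : φ 1 ≠ 0)
    (hcyc : ∀ i < N, ∀ x, φ (s i * x) = φ (x * s i))
    (hmarkov : ∀ n < N, ∀ x ∈ coxeterSubalgebra s n, d * φ (x * s n) = φ x)
    {n : ℕ} (hn : n ≤ N) {x : B} (hx : x ∈ coxeterSubalgebra s n)
    (h : ∀ y ∈ coxeterSubalgebra s n, φ (x * y) = 0) : x = 0 := by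
  induction n generalizing x with
  | zero =>
    have hbot : coxeterSubalgebra s 0 = ⊥ := by
      rw [coxeterSubalgebra, show Set.Iio (0 : ℕ) = ∅ by ext; simp, Set.image_empty,
        Algebra.adjoin_empty]
    rw [hbot, Algebra.mem_bot] at hx
    obtain ⟨r, rfl⟩ := hx
    have h1 := h 1 (one_mem _)
    rw [mul_one, Algebra.algebraMap_eq_smul_one, map_smul, smul_eq_mul] at h1
    rw [(mul_eq_zero.mp h1).resolve_right hφ, map_zero]
  | succ n ih =>
    have hd0 : d ≠ 0 := by simpa using hd 0
    let H := coxeterSubalgebra s n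
    have huniq : ∀ a ∈ H, ∀ b ∈ H, (∀ y ∈ H, φ (a * y) = φ (b * y)) → a = b := by
      intro a ha b hb hab
      refine sub_eq_zero.mp (ih (by omega) (sub_mem ha hb) fun y hy => ?_)
      rw [sub_mul, map_sub, hab y hy, sub_self]
    let F : B →ₗ[ℂ] Module.Dual ℂ H :=
      { toFun := fun b => φ ∘ₗ LinearMap.mulLeft ℂ b ∘ₗ H.val.toLinearMap
        map_add' := fun a b => by ext y; simp [add_mul]
        map_smul' := fun c b => by ext y; simp }
    have hF : Function.Injective (F ∘ₗ H.val.toLinearMap) := by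
      intro a b hab
      refine Subtype.ext (huniq a a.2 b b.2 fun y hy => ?_)
      exact congrArg (fun f : Module.Dual ℂ H => f ⟨y, hy⟩) hab
    let e := LinearEquiv.ofInjectiveOfFinrankEq (F ∘ₗ H.val.toLinearMap) hF
      (Subspace.dual_finrank_eq (K := ℂ) (V := H)).symm
    let E : B →ₗ[ℂ] B := H.val.toLinearMap ∘ₗ e.symm.toLinearMap ∘ₗ F
    have hEmem : ∀ y, E y ∈ H := fun y => (e.symm (F y)).2
    have hE : ∀ y, ∀ h ∈ H, φ (E y * h) = φ (y * h) := fun y h hh =>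
      congrArg (fun f : Module.Dual ℂ H => f ⟨h, hh⟩) (e.apply_symm_apply (F y))
    have hHN : H ≤ coxeterSubalgebra s N := coxeterSubalgebra_mono s (by omega)
    have hEr : ∀ y, ∀ h ∈ H, E (y * h) = E y * h := by
      intro y h hh
      refine huniq _ (hEmem _) _ (mul_mem (hEmem _) hh) fun z hz => ?_
      rw [hE _ z hz, mul_assoc, mul_assoc, hE _ _ (mul_mem hh hz)]
    have hEl : ∀ y, ∀ h ∈ H, E (h * y) = h * E y := by
      intro y h hh
      refine huniq _ (hEmem _) _ (mul_mem hh (hEmem _)) fun z hz => ?_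
      rw [hE _ z hz, mul_assoc, mul_assoc, map_mul_comm hcyc (hHN hh),
        map_mul_comm hcyc (hHN hh), mul_assoc, mul_assoc, hE _ _ (mul_mem hz hh)]
    have hE1 : E 1 = 1 := huniq _ (hEmem _) _ (one_mem _) fun z hz => hE _ z hz
    have hEs : E (s n) = d⁻¹ • 1 := by
      refine huniq _ (hEmem _) _ (Subalgebra.smul_mem _ (one_mem _) _) fun z hz => ?_
      rw [hE _ z hz, hcyc n (by omega), smul_mul_assoc, one_mul, map_smul, smul_eq_mul,
        ← hmarkov n (by omega) z hz, inv_mul_cancel_left₀ hd0]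
    let T : B →ₗ[ℂ] B := ∑ i ∈ Finset.range (n + 2),
      LinearMap.mulRight ℂ (descProd s (n + 1) i) ∘ₗ E ∘ₗ
        LinearMap.mulRight ℂ (ascProd s (n + 1) i)
    have hT : ∀ y, T y = ∑ i ∈ Finset.range (n + 2),
        E (y * ascProd s (n + 1) i) * descProd s (n + 1) i := fun y => by
      simp [T, LinearMap.sum_apply]
    have hTs : ∀ j ≤ n, ∀ y, T (y * s j) = T y * s j := by
      intro j hj y
      rw [hT, hT, Finset.sum_mul]
      have hswap : ∀ i ∈ Finset.range (n + 2), Equiv.swap j (j + 1) i ∈ Finset.range (n + 2) := by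
        intro i hi
        rw [Finset.mem_range] at hi ⊢
        rw [Equiv.swap_apply_def]
        split_ifs <;> omega
      refine Finset.sum_bij' (fun i _ => Equiv.swap j (j + 1) i)
        (fun i _ => Equiv.swap j (j + 1) i) hswap hswap
        (fun i _ => Equiv.swap_apply_self _ _ _) (fun i _ => Equiv.swap_apply_self _ _ _) ?_
      intro i hi
      obtain ⟨h, hh, hsq, heq⟩ := hs.exists_descProd_mul (n := n) (i := Equiv.swap j (j + 1) i)
        (j := j) (by omega) (by have := Finset.mem_range.mp (hswap i hi); omega) hj
      rw [Equiv.swap_apply_self] at heq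
      have hasc : s j * ascProd s (n + 1) i
          = ascProd s (n + 1) (Equiv.swap j (j + 1) i) * h := by
        have hi1 := hs.descProd_mul_ascProd (m := n + 1) (by omega) i
        have hi2 := hs.ascProd_mul_descProd (m := n + 1) (by omega) (Equiv.swap j (j + 1) i)
        calc s j * ascProd s (n + 1) i
            = (ascProd s (n + 1) (Equiv.swap j (j + 1) i)
                * descProd s (n + 1) (Equiv.swap j (j + 1) i)) * s j
                * ascProd s (n + 1) i := by rw [hi2, one_mul]
          _ = ascProd s (n + 1) (Equiv.swap j (j + 1) i)
                * (descProd s (n + 1) (Equiv.swap j (j + 1) i) * s j)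
                * ascProd s (n + 1) i := by simp only [mul_assoc]
          _ = ascProd s (n + 1) (Equiv.swap j (j + 1) i) * h
                * (descProd s (n + 1) i * ascProd s (n + 1) i) := by
              rw [heq]; simp only [mul_assoc]
          _ = _ := by rw [hi1, mul_one]
      rw [mul_assoc y, hasc, ← mul_assoc y, hEr _ h hh, mul_assoc (E _), mul_assoc (E _), heq]
    have hTx : ∀ z ∈ coxeterSubalgebra s (n + 1), ∀ y, T (y * z) = T y * z := by
      intro z hz
      induction hz using Algebra.adjoin_induction with
      | mem z hz => obtain ⟨j, hj, rfl⟩ := hz; exact hTs j (Nat.lt_succ_iff.mp hj)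
      | algebraMap r =>
        intro y
        rw [← Algebra.commutes, ← Algebra.commutes, ← Algebra.smul_def, ← Algebra.smul_def,
          map_smul]
      | add a b _ _ ha hb => intro y; rw [mul_add, mul_add, map_add, ha, hb]
      | mul a b _ _ ha hb => intro y; rw [← mul_assoc, ← mul_assoc, hb, ha]
    have hT1 : T 1 = d⁻¹ • jucysMurphy s (n + 1) + 1 := by
      rw [hT, Finset.sum_range_succ, ascProd_of_le s le_rfl, descProd_of_le s le_rfl, one_mul,
        mul_one, hE1, ← hs.sum_ascProd_mul_descProd (by omega), Finset.smul_sum]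
      congr 1
      refine Finset.sum_congr rfl fun i hi => ?_
      have hi : i ≤ n := by simpa [Nat.lt_succ_iff] using hi
      rw [one_mul, ascProd_succ s hi, descProd_succ s hi, hEl _ _ (ascProd_mem s n i), hEs]
      simp [mul_assoc]
    have hTzero : T x = 0 := by
      rw [hT]
      refine Finset.sum_eq_zero fun i _ => ?_
      have : E (x * ascProd s (n + 1) i) = 0 := by
        refine huniq _ (hEmem _) _ (zero_mem _) fun z hz => ?_
        rw [hE _ z hz, zero_mul, map_zero, mul_assoc]
        exact h _ (mul_mem (ascProd_mem s _ i) (coxeterSubalgebra_mono s n.le_succ hz))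
      rw [this, zero_mul]
    have hfin := hTx x hx 1
    rw [one_mul, hTzero, hT1, add_mul, one_mul, smul_mul_assoc] at hfin
    refine hs.eq_zero_of_jucysMurphy_mul_eq_smul (b := -d) hn (fun m hm => hd (-m) ?_) ?_
    · push_cast; rw [← hm, neg_neg]
    · have := congrArg (d • ·) hfin
      simp only [smul_zero, smul_add, smul_inv_smul₀ hd0] at this
      rw [neg_smul]
      exact eq_neg_of_add_eq_zero_left this.symm

end IsCoxeterFamily

end Markov

section Growth

/-- The transposition of `i` and `i + 1` in `Fin (N + 1)`, and `1` if `N ≤ i`. -/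
def adjSwap (N i : ℕ) : Equiv.Perm (Fin (N + 1)) :=
  if h : i < N then Equiv.swap (Fin.castSucc ⟨i, h⟩) (Fin.succ ⟨i, h⟩) else 1

theorem adjSwap_mul_self (N i : ℕ) : adjSwap N i * adjSwap N i = 1 := by
  unfold adjSwap
  split_ifs <;> simp

theorem adjSwap_comm (N : ℕ) {i j : ℕ} (hij : i + 1 < j) (hj : j < N) :
    adjSwap N i * adjSwap N j = adjSwap N j * adjSwap N i := by
  rw [adjSwap, adjSwap, dif_pos hj, dif_pos (by omega)]
  refine (Equiv.Perm.disjoint_swap_swap ?_).commute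
  simp [Fin.ext_iff]
  omega

theorem adjSwap_braid (N : ℕ) {i : ℕ} (hi : i + 1 < N) :
    adjSwap N i * adjSwap N (i + 1) * adjSwap N i
      = adjSwap N (i + 1) * adjSwap N i * adjSwap N (i + 1) := by
  rw [adjSwap, adjSwap, dif_pos hi, dif_pos (by omega)]
  have h : (Fin.succ ⟨i, by omega⟩ : Fin (N + 1)) = Fin.castSucc ⟨i + 1, hi⟩ := by
    simp
  rw [h, Equiv.swap_comm (Fin.castSucc ⟨i + 1, hi⟩) (Fin.succ _),
    Equiv.swap_comm (Fin.castSucc ⟨i, _⟩) (Fin.castSucc ⟨i + 1, hi⟩),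
    Equiv.swap_mul_swap_mul_swap (by simp [Fin.ext_iff]) (by simp [Fin.ext_iff]; omega),
    Equiv.swap_comm (Fin.castSucc ⟨i + 1, hi⟩) (Fin.castSucc ⟨i, _⟩),
    Equiv.swap_comm (Fin.succ _) (Fin.castSucc ⟨i + 1, hi⟩),
    Equiv.swap_mul_swap_mul_swap (by simp [Fin.ext_iff]) (by simp [Fin.ext_iff]; omega),
    Equiv.swap_comm]

/-- An algebra carrying a Markov trace with non-integral parameter on a Coxeter family with `N`
members has dimension at least `(N + 1)!`. -/
theorem IsCoxeterFamily.factorial_le_finrank {C : Type*} [Ring C] [Algebra ℂ C]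
    [FiniteDimensional ℂ C] {N : ℕ} {c : ℕ → C} (hc : IsCoxeterFamily N c) {d : ℂ}
    (hd : ∀ m : ℤ, d ≠ m) {φ : C →ₗ[ℂ] ℂ} (hφ : φ 1 ≠ 0)
    (hcyc : ∀ i < N, ∀ x, φ (c i * x) = φ (x * c i))
    (hmarkov : ∀ n < N, ∀ x ∈ coxeterSubalgebra c n, d * φ (x * c n) = φ x) :
    (N + 1).factorial ≤ Module.finrank ℂ C := by
  let G := Equiv.Perm (Fin (N + 1))
  let M := MonoidAlgebra ℂ G
  let e : M ≃ₗ[ℂ] (G →₀ ℂ) := MonoidAlgebra.coeffLinearEquiv ℂ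
  have : FiniteDimensional ℂ M := Module.Finite.equiv e.symm
  let s : ℕ → M × C := fun i => (MonoidAlgebra.of ℂ G (adjSwap N i), c i)
  have hs : IsCoxeterFamily N s :=
    { sq := fun i hi => Prod.ext
        (by rw [Prod.fst_mul, ← map_mul, adjSwap_mul_self, map_one]; rfl) (hc.sq i hi)
      comm := fun i j hij hj => Prod.ext
        (by simp only [s, Prod.fst_mul, ← map_mul]; rw [adjSwap_comm N hij hj]) (hc.comm i j hij hj)
      braid := fun i hi => Prod.ext
        (by simp only [s, Prod.fst_mul, ← map_mul]; rw [adjSwap_braid N hi]) (hc.braid i hi) }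
  have hsnd : ∀ n, ∀ x ∈ coxeterSubalgebra s n, x.2 ∈ coxeterSubalgebra c n := by
    intro n x hx
    have : (coxeterSubalgebra s n).map (AlgHom.snd ℂ M C) = coxeterSubalgebra c n := by
      rw [coxeterSubalgebra, AlgHom.map_adjoin, coxeterSubalgebra, ← Set.image_comp]
      rfl
    rw [← this]
    exact ⟨x, hx, rfl⟩
  let H := coxeterSubalgebra s N
  have hinj : Function.Injective ((AlgHom.snd ℂ M C).toLinearMap ∘ₗ H.val.toLinearMap) := by
    rw [injective_iff_map_eq_zero]
    intro x hx
    have hx2 : (x : M × C).2 = 0 := hx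
    refine Subtype.ext (hs.eq_zero_of_markov hd (φ := φ ∘ₗ (AlgHom.snd ℂ M C).toLinearMap) hφ
      (fun i hi x => hcyc i hi x.2) (fun n hn x hx => hmarkov n hn x.2 (hsnd n x hx)) le_rfl x.2
      fun y _ => ?_)
    simp [hx2]
  have hsurj : Function.Surjective ((AlgHom.fst ℂ M C).toLinearMap ∘ₗ H.val.toLinearMap) := by
    have hmap : H.map (AlgHom.fst ℂ M C) = ⊤ := by
      have hG : ∀ g : G, MonoidAlgebra.of ℂ G g ∈ H.map (AlgHom.fst ℂ M C) := by
        intro g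
        have hg : g ∈ Submonoid.closure
            (Set.range fun i : Fin N => Equiv.swap i.castSucc i.succ) := by
          rw [Equiv.Perm.mclosure_swap_castSucc_succ]; trivial
        induction hg using Submonoid.closure_induction with
        | mem g hg =>
          obtain ⟨i, rfl⟩ := hg
          exact ⟨s i, mem_coxeterSubalgebra s i.2, by simp [s, adjSwap]; rfl⟩
        | one => rw [map_one]; exact one_mem _
        | mul a b _ _ ha hb => rw [map_mul]; exact mul_mem ha hb
      refine top_unique fun x _ => ?_
      induction x using MonoidAlgebra.induction_on with
      | of g => exact hG g
      | add x y hx hy => exact add_mem (hx trivial) (hy trivial)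
      | smul r x hx => exact Subalgebra.smul_mem _ (hx trivial) r
    intro x
    obtain ⟨y, hy, rfl⟩ : x ∈ H.map (AlgHom.fst ℂ M C) := hmap ▸ Algebra.mem_top
    exact ⟨⟨y, hy⟩, rfl⟩
  calc (N + 1).factorial = Module.finrank ℂ M := by
        rw [e.finrank_eq, Module.finrank_finsupp_self, Fintype.card_perm, Fintype.card_fin]
    _ ≤ Module.finrank ℂ H := LinearMap.finrank_le_finrank_of_surjective hsurj
    _ ≤ Module.finrank ℂ C := LinearMap.finrank_le_finrank_of_injective hinj

end Growth

section TensorPower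

/-- The algebra map `X ⊗ X → C` given by two algebra maps with commuting ranges. -/
noncomputable abbrev pairHom {X C : Type*} [Ring X] [Algebra ℂ X] [Ring C] [Algebra ℂ C]
    (f g : X →ₐ[ℂ] C) (h : ∀ x y, Commute (f x) (g y)) : X ⊗[ℂ] X →ₐ[ℂ] C :=
  Algebra.TensorProduct.lift f g h

theorem commute_pairHom {X C : Type*} [Ring X] [Algebra ℂ X] [Ring C] [Algebra ℂ C]
    {f g : X →ₐ[ℂ] C} (h : ∀ x y, Commute (f x) (g y)) {z : C}
    (hf : ∀ x, Commute z (f x)) (hg : ∀ x, Commute z (g x)) (w : X ⊗[ℂ] X) :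
    Commute z (pairHom f g h w) := by
  induction w using TensorProduct.induction_on with
  | zero => rw [map_zero]; exact Commute.zero_right _
  | tmul a b => rw [pairHom, Algebra.TensorProduct.lift_tmul]; exact (hf a).mul_right (hg b)
  | add a b ha hb => rw [map_add]; exact ha.add_right hb

/-- The braid relation for an element of `X ⊗ X`, tested in all algebras with three
commuting copies of `X`. -/
def SatisfiesBraid.{u} {X : Type u} [Ring X] [Algebra ℂ X] (c : X ⊗[ℂ] X) : Prop :=
  ∀ (C : Type u) [Ring C] [Algebra ℂ C] (f g h : X →ₐ[ℂ] C)
    (hfg : ∀ x y, Commute (f x) (g y)) (hgh : ∀ x y, Commute (g x) (h y)),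
    (∀ x y, Commute (f x) (h y)) →
    pairHom f g hfg c * pairHom g h hgh c * pairHom f g hfg c
      = pairHom g h hgh c * pairHom f g hfg c * pairHom g h hgh c

open PiTensorProduct in
theorem commute_singleAlgHom {X ι : Type*} [Ring X] [Algebra ℂ X] [DecidableEq ι] {i j : ι}
    (hij : i ≠ j) (x y : X) :
    Commute (singleAlgHom (R := ℂ) (A := fun _ : ι => X) i x)
      (singleAlgHom (R := ℂ) (A := fun _ : ι => X) j y) :=
  Commute.tprod (Pi.mulSingle_commute (f := fun _ : ι => X) hij x y)

section

variable {X ι : Type*} [Ring X] [Algebra ℂ X] (τ : X →ₗ[ℂ] ℂ)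

/-- The tensor power of a linear functional. -/
noncomputable def tensorPowerFunctional (ι : Type*) [Fintype ι] : (⨂[ℂ] _ : ι, X) →ₗ[ℂ] ℂ :=
  PiTensorProduct.lift ((MultilinearMap.mkPiAlgebra ℂ ι ℂ).compLinearMap fun _ => τ)

@[simp]
theorem tensorPowerFunctional_tprod [Fintype ι] (x : ι → X) :
    tensorPowerFunctional τ ι (PiTensorProduct.tprod ℂ x) = ∏ i, τ (x i) := by
  simp [tensorPowerFunctional]

/-- Applying a linear functional to the `j`-th tensor factor. -/
noncomputable def slice [DecidableEq ι] (j : ι) : (⨂[ℂ] _ : ι, X) →ₗ[ℂ] ⨂[ℂ] _ : ι, X :=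
  PiTensorProduct.map fun k => if k = j then τ.smulRight (1 : X) else LinearMap.id

theorem slice_singleAlgHom_mul [DecidableEq ι] {i j : ι} (hij : i ≠ j) (a : X)
    (w : ⨂[ℂ] _ : ι, X) :
    slice τ j (PiTensorProduct.singleAlgHom (R := ℂ) i a * w)
      = PiTensorProduct.singleAlgHom (R := ℂ) i a * slice τ j w := by
  induction w using PiTensorProduct.induction_on with
  | smul_tprod r y =>
    simp only [PiTensorProduct.singleAlgHom_apply, mul_smul_comm, map_smul,
      PiTensorProduct.tprod_mul_tprod, slice, PiTensorProduct.map_tprod]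
    congr 2
    ext k
    by_cases hk : k = i
    · subst hk; simp [hij]
    · simp [Pi.mulSingle_eq_of_ne hk]
  | add x y hx hy => rw [mul_add, map_add, hx, hy, map_add, mul_add]

theorem slice_pairHom_mul [DecidableEq ι] {i i' j : ι} (hi : i ≠ j) (hi' : i' ≠ j)
    (h : ∀ x y, Commute (PiTensorProduct.singleAlgHom (R := ℂ) (A := fun _ : ι => X) i x)
      (PiTensorProduct.singleAlgHom (R := ℂ) (A := fun _ : ι => X) i' y))
    (z : X ⊗[ℂ] X) (w : ⨂[ℂ] _ : ι, X) :
    slice τ j (pairHom _ _ h z * w) = pairHom _ _ h z * slice τ j w := by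
  induction z using TensorProduct.induction_on with
  | zero => simp
  | tmul a b =>
    rw [pairHom, Algebra.TensorProduct.lift_tmul, mul_assoc, slice_singleAlgHom_mul τ hi,
      slice_singleAlgHom_mul τ hi', mul_assoc]
  | add a b ha hb => rw [map_add, add_mul, add_mul, map_add, ha, hb]

theorem slice_singleAlgHom [DecidableEq ι] (j : ι) (b : X) :
    slice τ j (PiTensorProduct.singleAlgHom (R := ℂ) j b) = τ b • 1 := by
  have : slice τ j (PiTensorProduct.singleAlgHom (R := ℂ) j b)
      = PiTensorProduct.singleAlgHom (R := ℂ) (A := fun _ : ι => X) j (τ b • 1) := by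
    simp only [PiTensorProduct.singleAlgHom_apply, slice, PiTensorProduct.map_tprod]
    congr 1
    ext k
    by_cases hk : k = j
    · subst hk; simp
    · simp [hk]
  rw [this, map_smul, map_one]

theorem tensorPowerFunctional_slice [Fintype ι] [DecidableEq ι] (j : ι) (w : ⨂[ℂ] _ : ι, X) :
    tensorPowerFunctional τ ι (slice τ j w) = τ 1 * tensorPowerFunctional τ ι w := by
  induction w using PiTensorProduct.induction_on with
  | smul_tprod r y =>
    have : ∀ k, τ ((if k = j then τ.smulRight (1 : X) else LinearMap.id : X →ₗ[ℂ] X) (y k))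
        = (if k = j then τ 1 else 1) * τ (y k) := by
      intro k
      split_ifs <;> simp [mul_comm]
    simp only [map_smul, slice, PiTensorProduct.map_tprod, tensorPowerFunctional_tprod, this,
      Finset.prod_mul_distrib, Finset.prod_ite_eq', Finset.mem_univ, if_true, smul_eq_mul]
    ring
  | add x y hx hy => rw [map_add, map_add, hx, hy, map_add, mul_add]

theorem tensorPowerFunctional_singleAlgHom_mul [Fintype ι] [DecidableEq ι]
    {σ : X → X} (hσ : ∀ a x, τ (a * x) = τ (x * σ a))
    (i : ι) (a : X) (w : ⨂[ℂ] _ : ι, X) :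
    tensorPowerFunctional τ ι (PiTensorProduct.singleAlgHom (R := ℂ) i a * w)
      = tensorPowerFunctional τ ι (w * PiTensorProduct.singleAlgHom (R := ℂ) i (σ a)) := by
  induction w using PiTensorProduct.induction_on with
  | smul_tprod r y =>
    simp only [PiTensorProduct.singleAlgHom_apply, mul_smul_comm, smul_mul_assoc, map_smul,
      PiTensorProduct.tprod_mul_tprod, tensorPowerFunctional_tprod]
    congr 1
    refine Finset.prod_congr rfl fun k _ => ?_
    by_cases hk : k = i
    · subst hk; simpa using hσ a (y k)
    · simp [Pi.mulSingle_eq_of_ne hk]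
  | add x y hx hy => rw [mul_add, map_add, hx, hy, add_mul, map_add]

theorem tensorPowerFunctional_pairHom_mul [Fintype ι] [DecidableEq ι]
    {σ : X →ₗ[ℂ] X} (hσ : ∀ a x, τ (a * x) = τ (x * σ a))
    {i j : ι}
    (h : ∀ x y, Commute (PiTensorProduct.singleAlgHom (R := ℂ) (A := fun _ : ι => X) i x)
      (PiTensorProduct.singleAlgHom (R := ℂ) (A := fun _ : ι => X) j y))
    (z : X ⊗[ℂ] X) (w : ⨂[ℂ] _ : ι, X) :
    tensorPowerFunctional τ ι (pairHom _ _ h z * w)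
      = tensorPowerFunctional τ ι (w * pairHom _ _ h (TensorProduct.map σ σ z)) := by
  induction z using TensorProduct.induction_on with
  | zero => simp
  | tmul a b =>
    rw [TensorProduct.map_tmul, pairHom, Algebra.TensorProduct.lift_tmul,
      Algebra.TensorProduct.lift_tmul, mul_assoc,
      tensorPowerFunctional_singleAlgHom_mul τ hσ, mul_assoc,
      tensorPowerFunctional_singleAlgHom_mul τ hσ, mul_assoc]
  | add a b ha hb => simp only [map_add, add_mul, mul_add, ha, hb]

end

theorem exists_pow_lt_factorial (q : ℕ) : ∃ N : ℕ, q ^ (N + 1) < (N + 1).factorial := by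
  have h := (FloorSemiring.tendsto_pow_div_factorial_atTop (q : ℝ)).comp
    (Filter.tendsto_add_atTop_nat 1)
  obtain ⟨N, hN⟩ := (h.eventually_lt_const one_pos).exists
  refine ⟨N, ?_⟩
  have hpos : (0 : ℝ) < (N + 1).factorial := by exact_mod_cast Nat.factorial_pos _
  rw [Function.comp_apply, div_lt_one hpos] at hN
  exact_mod_cast hN

/-- An involutive solution of the braid relation which is compatible with a twisted trace `τ` and
has partial trace `1` forces `τ 1` to be an integer. -/
theorem exists_int_of_braiding {X : Type*} [Ring X] [Algebra ℂ X] [FiniteDimensional ℂ X]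
    {c : X ⊗[ℂ] X} (hsq : c * c = 1) (hbraid : SatisfiesBraid c)
    {τ : X →ₗ[ℂ] ℂ} {σ : X →ₗ[ℂ] X} (hσ : ∀ a x, τ (a * x) = τ (x * σ a))
    (hσc : TensorProduct.map σ σ c = c)
    (hτc : TensorProduct.lift ((LinearMap.lsmul ℂ X).flip.compl₂ τ) c = 1) :
    ∃ n : ℤ, τ 1 = n := by
  by_contra! hd
  obtain ⟨N, hN⟩ := exists_pow_lt_factorial (Module.finrank ℂ X)
  refine hN.not_ge ?_
  let C := ⨂[ℂ] _ : Fin (N + 1), X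
  let ι : Fin (N + 1) → X →ₐ[ℂ] C := fun i =>
    PiTensorProduct.singleAlgHom (R := ℂ) (A := fun _ => X) i
  have hι : ∀ {i j : Fin (N + 1)}, i ≠ j → ∀ x y, Commute (ι i x) (ι j y) :=
    fun h x y => commute_singleAlgHom h x y
  have hne : ∀ i : Fin N, i.castSucc ≠ i.succ := fun i => Fin.castSucc_lt_succ.ne
  let p : Fin N → X ⊗[ℂ] X →ₐ[ℂ] C := fun i => pairHom (ι i.castSucc) (ι i.succ) (hι (hne i))
  let s : ℕ → C := fun i => if h : i < N then p ⟨i, h⟩ c else 1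
  have hs : ∀ {i : ℕ} (h : i < N), s i = p ⟨i, h⟩ c := fun h => dif_pos h
  have hcox : IsCoxeterFamily N s :=
    { sq := fun i hi => by rw [hs hi, ← map_mul, hsq, map_one]
      comm := fun i j hij hj => by
        rw [hs hj, hs (by omega : i < N)]
        refine commute_pairHom _ (fun x => ?_) (fun x => ?_) c <;>
        refine (commute_pairHom _ (fun y => hι ?_ x y) (fun y => hι ?_ x y) c).symm <;>
        simp [Fin.ext_iff] <;> omega
      braid := fun i hi => by
        rw [hs hi, hs (by omega : i < N)]
        have e : (Fin.succ ⟨i, by omega⟩ : Fin (N + 1)) = Fin.castSucc ⟨i + 1, hi⟩ := by simp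
        exact hbraid C (ι (Fin.castSucc ⟨i, by omega⟩)) (ι (Fin.castSucc ⟨i + 1, hi⟩))
          (ι (Fin.succ ⟨i + 1, hi⟩)) (hι (by simp [Fin.ext_iff])) (hι (hne _))
          (hι (by simp [Fin.ext_iff]; omega)) }
  have hd0 : τ 1 ≠ 0 := by simpa using hd 0
  have hfin : Module.finrank ℂ C = Module.finrank ℂ X ^ (N + 1) := by
    rw [Module.finrank_eq_card_basis
      (Basis.piTensorProduct fun _ : Fin (N + 1) => Module.finBasis ℂ X)]
    simp
  rw [← hfin]
  have hslice : ∀ n, ∀ hn : n < N, ∀ x ∈ coxeterSubalgebra s n, ∀ w,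
      slice τ (Fin.succ ⟨n, hn⟩) (x * w) = x * slice τ (Fin.succ ⟨n, hn⟩) w := by
    intro n hn x hx
    induction hx using Algebra.adjoin_induction with
    | mem x hx =>
      obtain ⟨i, hi, rfl⟩ := hx
      have hi : i < n := hi
      rw [hs (hi.trans hn)]
      exact slice_pairHom_mul τ (by simp [Fin.ext_iff]; omega) (by simp [Fin.ext_iff]; omega) _ c
    | algebraMap r => intro w; rw [← Algebra.smul_def, map_smul, Algebra.smul_def]
    | add a b _ _ ha hb => intro w; rw [add_mul, map_add, ha, hb, add_mul]
    | mul a b _ _ ha hb => intro w; rw [mul_assoc, ha, hb, mul_assoc]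
  refine hcox.factorial_le_finrank hd (φ := tensorPowerFunctional τ (Fin (N + 1))) ?_ ?_ ?_
  · rw [PiTensorProduct.one_def, tensorPowerFunctional_tprod]
    simpa using hd0
  · intro i hi x
    rw [hs hi]
    conv_rhs => rw [← hσc]
    exact tensorPowerFunctional_pairHom_mul τ hσ _ c x
  · intro n hn x hx
    rw [hs hn, ← tensorPowerFunctional_slice τ (Fin.succ ⟨n, hn⟩), hslice n hn x hx]
    have key : ∀ z : X ⊗[ℂ] X, slice τ (Fin.succ ⟨n, hn⟩) (p ⟨n, hn⟩ z)
        = ι (Fin.castSucc ⟨n, hn⟩)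
          (TensorProduct.lift ((LinearMap.lsmul ℂ X).flip.compl₂ τ) z) := by
      intro z
      induction z using TensorProduct.induction_on with
      | zero => simp
      | tmul a b =>
        simp only [p, pairHom, Algebra.TensorProduct.lift_tmul, ι]
        rw [slice_singleAlgHom_mul τ (hne _), slice_singleAlgHom, TensorProduct.lift.tmul,
          mul_smul_comm, mul_one]
        simp only [LinearMap.compl₂_apply, LinearMap.flip_apply, LinearMap.lsmul_apply, map_smul]
      | add a b ha hb => simp only [map_add, ha, hb]
    rw [key, hτc, map_one, mul_one]

end TensorPower

/-- The linear map `a ⊗ b ↦ b * (x * a)`. -/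
noncomputable def sandwich {k A : Type*} [CommRing k] [Ring A] [Algebra k A] (x : A) :
    A ⊗[k] A →ₗ[k] A :=
  LinearMap.mul' k A ∘ₗ LinearMap.lTensor A (LinearMap.mulLeft k x) ∘ₗ
    (TensorProduct.comm k A A).toLinearMap

@[simp]
theorem sandwich_tmul {k A : Type*} [CommRing k] [Ring A] [Algebra k A] (x a b : A) :
    sandwich (k := k) x (a ⊗ₜ b) = b * (x * a) := by
  simp [sandwich]

section Hopf

variable {k A : Type*} [CommRing k] [Ring A] [HopfAlgebra k A] {R : A ⊗[k] A}

local notation "𝒮" => HopfAlgebra.antipode k (A := A)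

theorem counit_rTensor_R13map_mul (x y : A ⊗[k] A) :
    TensorProduct.lid k (A ⊗[k] A) ((Coalgebra.counit (R := k) (A := A)).rTensor (A ⊗[k] A)
      (R13map k A x * ((1 : A) ⊗ₜ y)))
      = ((1 : A) ⊗ₜ (TensorProduct.lid k A ((Coalgebra.counit (R := k)).rTensor A x))) * y := by
  induction x using TensorProduct.induction_on with
  | zero => simp
  | tmul a b =>
    rw [R13map, TensorProduct.map_tmul, Algebra.TensorProduct.tmul_mul_tmul]
    simp only [mul_one, LinearMap.id_apply, TensorProduct.mk_apply, LinearMap.rTensor_tmul,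
      TensorProduct.lid_tmul, TensorProduct.tmul_smul, smul_mul_assoc]
  | add a b ha hb => simp only [map_add, add_mul, ha, hb, TensorProduct.tmul_add]

theorem counit_rTensor_assoc_comul (x : A ⊗[k] A) :
    TensorProduct.lid k (A ⊗[k] A) ((Coalgebra.counit (R := k) (A := A)).rTensor (A ⊗[k] A)
      (TensorProduct.assoc k A A A ((Coalgebra.comul (R := k)).rTensor A x))) = x := by
  have key (z : A ⊗[k] A) (b : A) :
      TensorProduct.lid k (A ⊗[k] A) ((Coalgebra.counit (R := k) (A := A)).rTensor (A ⊗[k] A)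
        (TensorProduct.assoc k A A A (z ⊗ₜ b)))
        = TensorProduct.lid k A ((Coalgebra.counit (R := k)).rTensor A z) ⊗ₜ b := by
    induction z using TensorProduct.induction_on with
    | zero => simp
    | tmul a c => simp [TensorProduct.smul_tmul']
    | add a c ha hc => simp only [map_add, TensorProduct.add_tmul, ha, hc]
  induction x using TensorProduct.induction_on with
  | zero => simp
  | tmul a b => rw [LinearMap.rTensor_tmul, key, Coalgebra.rTensor_counit_comul]; simp
  | add a b ha hb => simp only [map_add, ha, hb]

theorem IsQuasitriangular.one_tmul_counit (hR : IsQuasitriangular k A R) :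
    (1 : A) ⊗ₜ[k] (TensorProduct.lid k A ((Coalgebra.counit (R := k)).rTensor A R)) = 1 := by
  have h := counit_rTensor_R13map_mul R R
  rw [← hR.2.1, counit_rTensor_assoc_comul] at h
  exact hR.1.mul_right_cancel (by rw [one_mul, ← h])

theorem IsQuasitriangular.antipode_rTensor_mul (hR : IsQuasitriangular k A R) :
    LinearMap.rTensor A 𝒮 R * R = 1 := by
  set m : A ⊗[k] (A ⊗[k] A) →ₗ[k] A ⊗[k] A :=
    (LinearMap.mul' k A ∘ₗ LinearMap.rTensor A 𝒮).rTensor A ∘ₗ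
      (TensorProduct.assoc k A A A).symm.toLinearMap with hm
  have left (x : A ⊗[k] A) :
      m (TensorProduct.assoc k A A A ((Coalgebra.comul (R := k)).rTensor A x))
        = (1 : A) ⊗ₜ[k] (TensorProduct.lid k A ((Coalgebra.counit (R := k)).rTensor A x)) := by
    induction x using TensorProduct.induction_on with
    | zero => simp
    | tmul a b =>
      simp [hm, HopfAlgebra.mul_antipode_rTensor_comul_apply, Algebra.algebraMap_eq_smul_one,
        TensorProduct.smul_tmul]
    | add a b ha hb => simp only [map_add, ha, hb, TensorProduct.tmul_add]
  have right (x y : A ⊗[k] A) :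
      m (R13map k A x * ((1 : A) ⊗ₜ y)) = LinearMap.rTensor A 𝒮 x * y := by
    induction x using TensorProduct.induction_on with
    | zero => simp
    | tmul a b =>
      rw [R13map, TensorProduct.map_tmul, Algebra.TensorProduct.tmul_mul_tmul]
      induction y using TensorProduct.induction_on with
      | zero => simp
      | tmul c d => simp [hm]
      | add c d hc hd => simp only [mul_add, TensorProduct.tmul_add, map_add, hc, hd]
    | add a b ha hb => simp only [map_add, add_mul, ha, hb]
  rw [← right, ← hR.2.1, left, hR.one_tmul_counit]

theorem IsTriangular.comm_mul (hR : IsTriangular k A R) :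
    TensorProduct.comm k A A R * R = 1 := by
  obtain ⟨v, hv⟩ := hR.1.1
  have := hR.2
  rw [← hv] at this ⊢
  rw [Units.mul_eq_one_iff_inv_eq] at this
  rw [← this, Units.inv_mul]

theorem IsTriangular.antipode_rTensor (hR : IsTriangular k A R) :
    LinearMap.rTensor A 𝒮 R = TensorProduct.comm k A A R :=
  hR.1.1.mul_right_cancel (by rw [hR.1.antipode_rTensor_mul, hR.comm_mul])

theorem IsTriangular.map_antipode (hR : IsTriangular k A R) :
    TensorProduct.map 𝒮 𝒮 R = R := by
  have h (z : A ⊗[k] A) : LinearMap.lTensor A 𝒮 (TensorProduct.comm k A A z)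
      = TensorProduct.comm k A A (LinearMap.rTensor A 𝒮 z) := by
    induction z using TensorProduct.induction_on with
    | zero => simp
    | tmul a b => simp
    | add a b ha hb => simp only [map_add, ha, hb]
  have h' : TensorProduct.map 𝒮 𝒮 R = LinearMap.lTensor A 𝒮 (LinearMap.rTensor A 𝒮 R) := by
    rw [← LinearMap.comp_apply, LinearMap.lTensor_comp_rTensor]
  rw [h', hR.antipode_rTensor, h, hR.antipode_rTensor, TensorProduct.comm_comm]

theorem drinfeld_zero : drinfeld k A 0 = 0 := by simp [drinfeld]

theorem drinfeld_add (x y : A ⊗[k] A) :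
    drinfeld k A (x + y) = drinfeld k A x + drinfeld k A y := by simp [drinfeld]

theorem drinfeld_tmul (a b : A) : drinfeld k A (a ⊗ₜ b) = 𝒮 b * a := by simp [drinfeld]

theorem drinfeld_mul_tmul (z : A ⊗[k] A) (p q : A) :
    drinfeld k A (z * (p ⊗ₜ q)) = 𝒮 q * (drinfeld k A z * p) := by
  induction z using TensorProduct.induction_on with
  | zero => simp [drinfeld_zero]
  | tmul a b =>
    rw [Algebra.TensorProduct.tmul_mul_tmul, drinfeld_tmul, drinfeld_tmul,
      HopfAlgebra.antipode_mul_antidistrib, mul_assoc, mul_assoc]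
  | add a b ha hb => rw [add_mul, drinfeld_add, drinfeld_add, add_mul, mul_add, ha, hb]

theorem drinfeld_comm_comul_mul (y : A) (w : A ⊗[k] A) :
    drinfeld k A (TensorProduct.comm k A A (Coalgebra.comul (R := k) y) * w)
      = Coalgebra.counit (R := k) y • drinfeld k A w := by
  have key (z : A ⊗[k] A) (a b : A) :
      drinfeld k A (TensorProduct.comm k A A z * (a ⊗ₜ b))
        = 𝒮 b * (LinearMap.mul' k A (LinearMap.rTensor A 𝒮 z) * a) := by
    induction z using TensorProduct.induction_on with
    | zero => simp [drinfeld_zero]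
    | tmul c d =>
      rw [TensorProduct.comm_tmul, Algebra.TensorProduct.tmul_mul_tmul, drinfeld_tmul,
        HopfAlgebra.antipode_mul_antidistrib]
      simp [mul_assoc]
    | add c d hc hd => simp only [map_add, add_mul, drinfeld_add, mul_add, hc, hd]
  induction w using TensorProduct.induction_on with
  | zero => simp [drinfeld_zero]
  | tmul a b =>
    rw [key, HopfAlgebra.mul_antipode_rTensor_comul_apply, ← Algebra.smul_def, mul_smul_comm,
      drinfeld_tmul]
  | add a b ha hb => rw [mul_add, drinfeld_add, ha, hb, drinfeld_add, smul_add]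

theorem IsQuasitriangular.antipode_antipode_mul_drinfeld (hR : IsQuasitriangular k A R) (x : A) :
    𝒮 (𝒮 x) * drinfeld k A R = drinfeld k A R * x := by
  set K : A ⊗[k] (A ⊗[k] A) →ₗ[k] A :=
    LinearMap.mul' k A ∘ₗ TensorProduct.map (𝒮 ∘ₗ LinearMap.mul' k A ∘ₗ LinearMap.lTensor A 𝒮)
      (LinearMap.mulLeft k (drinfeld k A R)) ∘ₗ
      (TensorProduct.comm k A (A ⊗[k] A)).toLinearMap with hK
  have left (w : A ⊗[k] A) : K (LinearMap.lTensor A (Coalgebra.comul (R := k)) w)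
      = drinfeld k A R *
        TensorProduct.rid k A (LinearMap.lTensor A (Coalgebra.counit (R := k)) w) := by
    induction w using TensorProduct.induction_on with
    | zero => simp
    | tmul a y =>
      simp [hK, Algebra.algebraMap_eq_smul_one, HopfAlgebra.mul_antipode_lTensor_comul_apply]
    | add a b ha hb => simp only [map_add, ha, hb, mul_add]
  have assoc (z : A ⊗[k] A) (c : A) :
      K (TensorProduct.assoc k A A A (z ⊗ₜ c)) = 𝒮 (𝒮 c) * drinfeld k A (R * z) := by
    induction z using TensorProduct.induction_on with
    | zero => simp [drinfeld_zero]
    | tmul a b =>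
      rw [drinfeld_mul_tmul]
      simp [hK, HopfAlgebra.antipode_mul_antidistrib, mul_assoc]
    | add a b ha hb =>
      simp only [map_add, TensorProduct.add_tmul, mul_add, drinfeld_add, ha, hb]
  have right (w : A ⊗[k] A) :
      K (TensorProduct.assoc k A A A (LinearMap.rTensor A (Coalgebra.comul (R := k)) w))
      = 𝒮 (𝒮 (TensorProduct.lid k A (LinearMap.rTensor A (Coalgebra.counit (R := k)) w)))
        * drinfeld k A R := by
    induction w using TensorProduct.induction_on with
    | zero => simp
    | tmul y c =>
      rw [LinearMap.rTensor_tmul, assoc, ← hR.2.2.2, drinfeld_comm_comul_mul]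
      simp
    | add a b ha hb => simp only [map_add, ha, hb, add_mul]
  have h := right (Coalgebra.comul (R := k) x)
  rw [Coalgebra.coassoc_apply, left] at h
  simpa using h.symm

theorem IsTriangular.sandwich_drinfeld (hR : IsTriangular k A R) :
    sandwich (drinfeld k A R) R = 1 := by
  have h (z : A ⊗[k] A) : sandwich (drinfeld k A R) (TensorProduct.map 𝒮 𝒮 z)
      = drinfeld k A (R * LinearMap.rTensor A 𝒮 z) := by
    induction z using TensorProduct.induction_on with
    | zero => simp [drinfeld_zero]
    | tmul a b => simp [drinfeld_mul_tmul]
    | add a b ha hb => simp only [map_add, mul_add, drinfeld_add, ha, hb]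
  have h' := h R
  rw [hR.map_antipode, hR.antipode_rTensor, hR.2] at h'
  rw [h', Algebra.TensorProduct.one_def, drinfeld_tmul, HopfAlgebra.antipode_one, mul_one]

end Hopf

section YangBaxter

variable {X C : Type*} [Ring X] [Algebra ℂ X] [Ring C] [Algebra ℂ C]

theorem mul_pairHom {f g f' g' : X →ₐ[ℂ] C} (h : ∀ x y, Commute (f x) (g y))
    (h' : ∀ x y, Commute (f' x) (g' y)) {q : C} (hf : ∀ x, q * f x = f' x * q)
    (hg : ∀ x, q * g x = g' x * q) (z : X ⊗[ℂ] X) :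
    q * pairHom f g h z = pairHom f' g' h' z * q := by
  induction z using TensorProduct.induction_on with
  | zero => simp
  | tmul a b =>
    rw [pairHom, pairHom, Algebra.TensorProduct.lift_tmul, Algebra.TensorProduct.lift_tmul,
      ← mul_assoc, hf, mul_assoc, hg, mul_assoc]
  | add a b ha hb => rw [map_add, mul_add, ha, hb, map_add, add_mul]

theorem pairHom_comm {f g : X →ₐ[ℂ] C} (h : ∀ x y, Commute (f x) (g y))
    (h' : ∀ x y, Commute (g x) (f y)) (z : X ⊗[ℂ] X) :
    pairHom f g h (TensorProduct.comm ℂ X X z) = pairHom g f h' z := by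
  induction z using TensorProduct.induction_on with
  | zero => simp
  | tmul a b =>
    rw [TensorProduct.comm_tmul, pairHom, pairHom, Algebra.TensorProduct.lift_tmul,
      Algebra.TensorProduct.lift_tmul, (h b a).eq]
  | add a b ha hb => simp only [map_add, ha, hb]

variable {A : Type*} [Ring A] [HopfAlgebra ℂ A] {R : A ⊗[ℂ] A}

theorem IsQuasitriangular.pairHom_comul (hR : IsQuasitriangular ℂ A R) {f g h : A →ₐ[ℂ] C}
    (hfg : ∀ x y, Commute (f x) (g y)) (hgh : ∀ x y, Commute (g x) (h y))
    (hfh : ∀ x y, Commute (f x) (h y))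
    (hD : ∀ x y, Commute ((pairHom f g hfg).comp (Bialgebra.comulAlgHom ℂ A) x) (h y)) :
    pairHom ((pairHom f g hfg).comp (Bialgebra.comulAlgHom ℂ A)) h hD R
      = pairHom f h hfh R * pairHom g h hgh R := by
  set Φ : A ⊗[ℂ] (A ⊗[ℂ] A) →ₐ[ℂ] C := Algebra.TensorProduct.lift f (pairHom g h hgh)
    (fun x w => commute_pairHom hgh (hfg x) (hfh x) w) with hΦ
  have assoc (z : A ⊗[ℂ] A) (b : A) :
      Φ (TensorProduct.assoc ℂ A A A (z ⊗ₜ b)) = pairHom f g hfg z * h b := by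
    induction z using TensorProduct.induction_on with
    | zero => simp
    | tmul a c => simp [hΦ, mul_assoc]
    | add a c ha hc => simp only [map_add, TensorProduct.add_tmul, add_mul, ha, hc]
  have left (w : A ⊗[ℂ] A) :
      Φ (TensorProduct.assoc ℂ A A A (LinearMap.rTensor A (Coalgebra.comul (R := ℂ)) w))
        = pairHom ((pairHom f g hfg).comp (Bialgebra.comulAlgHom ℂ A)) h hD w := by
    induction w using TensorProduct.induction_on with
    | zero => simp
    | tmul a b => simp [assoc]
    | add a c ha hc => simp only [map_add, ha, hc]
  have right (w : A ⊗[ℂ] A) : Φ (R13map ℂ A w) = pairHom f h hfh w := by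
    induction w using TensorProduct.induction_on with
    | zero => simp
    | tmul a b => simp [hΦ, R13map]
    | add a c ha hc => simp only [map_add, ha, hc]
  rw [← left, hR.2.1, map_mul, right, hΦ, Algebra.TensorProduct.lift_tmul, map_one, one_mul]

theorem IsQuasitriangular.yangBaxter (hR : IsQuasitriangular ℂ A R) {f g h : A →ₐ[ℂ] C}
    (hfg : ∀ x y, Commute (f x) (g y)) (hgh : ∀ x y, Commute (g x) (h y))
    (hfh : ∀ x y, Commute (f x) (h y)) :
    pairHom f g hfg R * pairHom f h hfh R * pairHom g h hgh R
      = pairHom g h hgh R * pairHom f h hfh R * pairHom f g hfg R := by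
  have hgf (x y) : Commute (g x) (f y) := (hfg y x).symm
  have hD (x y) : Commute ((pairHom f g hfg).comp (Bialgebra.comulAlgHom ℂ A) x) (h y) :=
    (commute_pairHom hfg (fun a => (hfh a y).symm) (fun a => (hgh a y).symm) _).symm
  have hD' (x y) : Commute ((pairHom g f hgf).comp (Bialgebra.comulAlgHom ℂ A) x) (h y) :=
    (commute_pairHom hgf (fun a => (hgh a y).symm) (fun a => (hfh a y).symm) _).symm
  rw [mul_assoc, ← hR.pairHom_comul hfg hgh hfh hD, ← hR.pairHom_comul hgf hfh hgh hD']
  refine mul_pairHom _ _ (fun x => ?_) (fun x => ?_) R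
  · simp only [AlgHom.comp_apply, Bialgebra.comulAlgHom_apply]
    rw [← map_mul, ← hR.2.2.2, map_mul, pairHom_comm hfg hgf]
  · exact (commute_pairHom hfg (fun a => (hfh a x).symm) (fun a => (hgh a x).symm) R).symm

end YangBaxter

section Flip

variable (V : Type*) [AddCommGroup V] [Module ℂ V] [FiniteDimensional ℂ V]

/-- The element of `End V ⊗ End V` acting on `V ⊗ V` as the flip. -/
noncomputable def flipTensor : Module.End ℂ V ⊗[ℂ] Module.End ℂ V :=
  ∑ i, ∑ j, (((Module.finBasis ℂ V).coord j).smulRight (Module.finBasis ℂ V i) : Module.End ℂ V)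
    ⊗ₜ (((Module.finBasis ℂ V).coord i).smulRight (Module.finBasis ℂ V j) : Module.End ℂ V)

theorem endTensorEndAlgHom_injective :
    Function.Injective (Module.endTensorEndAlgHom (R := ℂ) (S := ℂ) (A := ℂ) (M := V) (N := V)) := by
  have h : ⇑(Module.endTensorEndAlgHom (R := ℂ) (S := ℂ) (A := ℂ) (M := V) (N := V))
      = homTensorHomEquiv ℂ V V V V := by
    ext1 z
    rw [homTensorHomEquiv_apply]
    induction z using TensorProduct.induction_on with
    | zero => simp
    | tmul a b => rfl
    | add a b ha hb => rw [map_add, map_add, ha, hb]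
  rw [h]
  exact (homTensorHomEquiv ℂ V V V V).injective

theorem endTensorEndAlgHom_flipTensor :
    Module.endTensorEndAlgHom (R := ℂ) (S := ℂ) (A := ℂ) (flipTensor V)
      = (TensorProduct.comm ℂ V V).toLinearMap := by
  refine ((Module.finBasis ℂ V).tensorProduct (Module.finBasis ℂ V)).ext fun ⟨k, l⟩ => ?_
  simp only [flipTensor, map_sum, Module.endTensorEndAlgHom_apply, LinearMap.sum_apply,
    Module.Basis.tensorProduct_apply]
  simp [Finsupp.single_apply, TensorProduct.tmul_ite, TensorProduct.ite_tmul, ite_smul]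

variable {V}

theorem flipTensor_mul (z : Module.End ℂ V ⊗[ℂ] Module.End ℂ V) :
    flipTensor V * z = TensorProduct.comm ℂ _ _ z * flipTensor V := by
  apply endTensorEndAlgHom_injective V
  rw [map_mul, map_mul, endTensorEndAlgHom_flipTensor]
  induction z using TensorProduct.induction_on with
  | zero => simp
  | tmul a b =>
    refine TensorProduct.ext' fun v w => ?_
    simp only [TensorProduct.comm_tmul, Module.endTensorEndAlgHom_apply, Module.End.mul_apply]
    rfl
  | add a b ha hb => simp only [map_add, mul_add, add_mul, ha, hb]

variable (V) in
theorem flipTensor_mul_self : flipTensor V * flipTensor V = 1 := by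
  apply endTensorEndAlgHom_injective V
  rw [map_mul, endTensorEndAlgHom_flipTensor, Algebra.TensorProduct.one_def,
    Module.endTensorEndAlgHom_apply]
  refine TensorProduct.ext' fun v w => ?_
  simp [Module.End.mul_apply]

theorem partialTrace_flipTensor_mul (w : Module.End ℂ V)
    (z : Module.End ℂ V ⊗[ℂ] Module.End ℂ V) :
    TensorProduct.lift ((LinearMap.lsmul ℂ (Module.End ℂ V)).flip.compl₂
      (LinearMap.trace ℂ V ∘ₗ LinearMap.mulLeft ℂ w)) (flipTensor V * z) = sandwich w z := by
  induction z using TensorProduct.induction_on with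
  | zero => simp
  | tmul x y =>
    have htr (i j) : LinearMap.trace ℂ V
        (w * ((((Module.finBasis ℂ V).coord i).smulRight (Module.finBasis ℂ V j)) * y))
        = (Module.finBasis ℂ V).repr (y (w (Module.finBasis ℂ V j))) i := by
      rw [← mul_assoc, LinearMap.trace_mul_comm, ← mul_assoc]
      have : y * w * (((Module.finBasis ℂ V).coord i).smulRight (Module.finBasis ℂ V j))
          = ((Module.finBasis ℂ V).coord i).smulRight (y (w (Module.finBasis ℂ V j))) := by
        ext v; simp
      rw [this, LinearMap.trace_smulRight]
      simp
    ext v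
    simp only [flipTensor, Finset.sum_mul, map_sum, Algebra.TensorProduct.tmul_mul_tmul,
      TensorProduct.lift.tmul, LinearMap.compl₂_apply, LinearMap.flip_apply, LinearMap.comp_apply,
      LinearMap.mulLeft_apply, htr, LinearMap.lsmul_apply, LinearMap.sum_apply, sandwich_tmul,
      LinearMap.smul_apply, Module.End.mul_apply, LinearMap.smulRight_apply,
      Module.Basis.coord_apply]
    rw [Finset.sum_comm]
    simp only [smul_comm _ ((Module.finBasis ℂ V).repr (x v) _), ← Finset.smul_sum,
      Module.Basis.sum_repr]
    simp only [← map_smul, ← map_sum, Module.Basis.sum_repr]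
  | add a b ha hb => rw [mul_add, map_add, ha, hb, map_add]

variable {C : Type*} [Ring C] [Algebra ℂ C] {f g h : Module.End ℂ V →ₐ[ℂ] C}

theorem pairHom_flipTensor_mul_left (hfg : ∀ x y, Commute (f x) (g y)) (x : Module.End ℂ V) :
    pairHom f g hfg (flipTensor V) * f x = g x * pairHom f g hfg (flipTensor V) := by
  have := congrArg (pairHom f g hfg) (flipTensor_mul (x ⊗ₜ[ℂ] (1 : Module.End ℂ V)))
  simpa using this

theorem pairHom_flipTensor_mul_right (hfg : ∀ x y, Commute (f x) (g y)) (x : Module.End ℂ V) :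
    pairHom f g hfg (flipTensor V) * g x = f x * pairHom f g hfg (flipTensor V) := by
  have := congrArg (pairHom f g hfg) (flipTensor_mul ((1 : Module.End ℂ V) ⊗ₜ[ℂ] x))
  simpa using this

/-- Composing a solution of the Yang–Baxter equation with the flip satisfies the braid
relation. -/
theorem satisfiesBraid_flipTensor_mul.{u} {V : Type u} [AddCommGroup V] [Module ℂ V]
    [FiniteDimensional ℂ V] (r : Module.End ℂ V ⊗[ℂ] Module.End ℂ V)
    (hr : ∀ (C : Type u) [Ring C] [Algebra ℂ C] (f g h : Module.End ℂ V →ₐ[ℂ] C)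
      (hfg : ∀ x y, Commute (f x) (g y)) (hgh : ∀ x y, Commute (g x) (h y))
      (hfh : ∀ x y, Commute (f x) (h y)),
      pairHom f g hfg r * pairHom f h hfh r * pairHom g h hgh r
        = pairHom g h hgh r * pairHom f h hfh r * pairHom f g hfg r) :
    SatisfiesBraid (flipTensor V * r) := by
  intro C _ _ f g h hfg hgh hfh
  have hq₁ : pairHom f g hfg (flipTensor V) * pairHom f g hfg (flipTensor V) = 1 := by
    rw [← map_mul, flipTensor_mul_self, map_one]
  have hq₂ : pairHom g h hgh (flipTensor V) * pairHom g h hgh (flipTensor V) = 1 := by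
    rw [← map_mul, flipTensor_mul_self, map_one]
  have hc₁ (x) : pairHom f g hfg (flipTensor V) * h x = h x * pairHom f g hfg (flipTensor V) :=
    (commute_pairHom hfg (fun a => (hfh a x).symm) (fun a => (hgh a x).symm) _).symm
  have hc₂ (x) : pairHom g h hgh (flipTensor V) * f x = f x * pairHom g h hgh (flipTensor V) :=
    (commute_pairHom hgh (hfg x) (hfh x) _).symm
  have h₁ := mul_pairHom hgh hfh (pairHom_flipTensor_mul_right hfg) hc₁
  have h₂ := mul_pairHom hfh hgh (pairHom_flipTensor_mul_left hfg) hc₁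
  have h₃ := mul_pairHom hfg hfh hc₂ (pairHom_flipTensor_mul_left hgh)
  have h₄ := mul_pairHom hfh hfg hc₂ (pairHom_flipTensor_mul_right hgh)
  have hp₁ := h₁ (flipTensor V)
  have hp₂ := h₃ (flipTensor V)
  have hyb := hr C f g h hfg hgh hfh
  simp only [map_mul]
  specialize h₁ r; specialize h₂ r; specialize h₃ r; specialize h₄ r
  generalize pairHom f g hfg (flipTensor V) = q₁ at *
  generalize pairHom g h hgh (flipTensor V) = q₂ at *
  generalize pairHom f h hfh (flipTensor V) = q₃ at *
  generalize pairHom f g hfg r = r₁ at *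
  generalize pairHom g h hgh r = r₂ at *
  generalize pairHom f h hfh r = r₃ at *
  calc q₁ * r₁ * (q₂ * r₂) * (q₁ * r₁) = q₁ * (r₁ * q₂) * (r₂ * q₁) * r₁ := by
        simp only [mul_assoc]
    _ = q₁ * q₂ * (r₃ * q₁) * r₃ * r₁ := by rw [← h₄, ← h₂]; simp only [mul_assoc]
    _ = q₁ * q₂ * q₁ * (r₂ * r₃ * r₁) := by rw [← h₁]; simp only [mul_assoc]
    _ = q₂ * q₁ * q₂ * (r₁ * r₃ * r₂) := by
        rw [hyb, hp₁, hp₂, mul_assoc q₃ q₁, hq₁, mul_assoc q₃ q₂, hq₂]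
    _ = q₂ * q₁ * (r₃ * q₂) * r₃ * r₂ := by rw [← h₃]; simp only [mul_assoc]
    _ = q₂ * (r₂ * q₁) * (r₁ * q₂) * r₂ := by rw [← h₄, ← h₂]; simp only [mul_assoc]
    _ = q₂ * r₂ * (q₁ * r₁) * (q₂ * r₂) := by simp only [mul_assoc]

end Flip

section Triangular

variable {A : Type*} [Ring A] [HopfAlgebra ℂ A] {R : A ⊗[ℂ] A}

theorem IsTriangular.exists_mul_drinfeld_eq_one (hR : IsTriangular ℂ A R) :
    ∃ v, v * drinfeld ℂ A R = 1 := by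
  have key (z : A ⊗[ℂ] A) : ∃ v, v * drinfeld ℂ A R = sandwich (drinfeld ℂ A R) z := by
    induction z using TensorProduct.induction_on with
    | zero => exact ⟨0, by simp⟩
    | tmul a b =>
      refine ⟨b * HopfAlgebra.antipode ℂ (HopfAlgebra.antipode ℂ a), ?_⟩
      rw [mul_assoc, hR.1.antipode_antipode_mul_drinfeld, sandwich_tmul]
    | add a b ha hb =>
      obtain ⟨v, hv⟩ := ha
      obtain ⟨w, hw⟩ := hb
      exact ⟨v + w, by rw [add_mul, hv, hw, map_add]⟩
  obtain ⟨v, hv⟩ := key R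
  exact ⟨v, hv.trans hR.sandwich_drinfeld⟩

theorem pairHom_map {X C : Type*} [Ring X] [Algebra ℂ X] [Ring C] [Algebra ℂ C]
    (ρ : A →ₐ[ℂ] X) {f g : X →ₐ[ℂ] C} (h : ∀ x y, Commute (f x) (g y)) (z : A ⊗[ℂ] A) :
    pairHom f g h (Algebra.TensorProduct.map ρ ρ z)
      = pairHom (f.comp ρ) (g.comp ρ) (fun x y => h (ρ x) (ρ y)) z := by
  induction z using TensorProduct.induction_on with
  | zero => simp
  | tmul a b => rfl
  | add a b ha hb => simp only [map_add, ha, hb]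

theorem comm_map {X : Type*} [Ring X] [Algebra ℂ X] (ρ : A →ₐ[ℂ] X) (z : A ⊗[ℂ] A) :
    TensorProduct.comm ℂ X X (Algebra.TensorProduct.map ρ ρ z)
      = Algebra.TensorProduct.map ρ ρ (TensorProduct.comm ℂ A A z) := by
  induction z using TensorProduct.induction_on with
  | zero => simp
  | tmul a b => simp
  | add a b ha hb => simp only [map_add, ha, hb]

theorem sandwich_map {X : Type*} [Ring X] [Algebra ℂ X] (ρ : A →ₐ[ℂ] X) (u : A)
    (z : A ⊗[ℂ] A) :
    sandwich (ρ u) (Algebra.TensorProduct.map ρ ρ z) = ρ (sandwich u z) := by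
  induction z using TensorProduct.induction_on with
  | zero => simp
  | tmul a b => simp
  | add a b ha hb => simp only [map_add, ha, hb]

theorem map_conj {X : Type*} [Ring X] [Algebra ℂ X] (a b : X) (z : X ⊗[ℂ] X) :
    TensorProduct.map (LinearMap.mulRight ℂ b ∘ₗ LinearMap.mulLeft ℂ a)
      (LinearMap.mulRight ℂ b ∘ₗ LinearMap.mulLeft ℂ a) z = (a ⊗ₜ a) * z * (b ⊗ₜ b) := by
  induction z using TensorProduct.induction_on with
  | zero => simp
  | tmul c d => simp
  | add c d hc hd => simp only [map_add, mul_add, add_mul, hc, hd]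

/-- The trace of the Drinfeld element in a finite-dimensional representation is an integer. -/
theorem IsTriangular.exists_int_trace (hR : IsTriangular ℂ A R) {V : Type*} [AddCommGroup V]
    [Module ℂ V] [FiniteDimensional ℂ V] (ρ : A →ₐ[ℂ] Module.End ℂ V) :
    ∃ n : ℤ, LinearMap.trace ℂ V (ρ (drinfeld ℂ A R)) = n := by
  obtain ⟨v, hv⟩ := hR.exists_mul_drinfeld_eq_one
  have hvu : ρ v * ρ (drinfeld ℂ A R) = 1 := by rw [← map_mul, hv, map_one]
  have huv : ρ (drinfeld ℂ A R) * ρ v = 1 := mul_eq_one_comm.mp hvu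
  have hsq : flipTensor V * Algebra.TensorProduct.map ρ ρ R *
      (flipTensor V * Algebra.TensorProduct.map ρ ρ R) = 1 := by
    nth_rw 1 [flipTensor_mul]
    rw [mul_assoc, ← mul_assoc (flipTensor V), flipTensor_mul_self, one_mul,
      comm_map, ← map_mul, hR.comm_mul, map_one]
  have hbraid : SatisfiesBraid (flipTensor V * Algebra.TensorProduct.map ρ ρ R) := by
    refine satisfiesBraid_flipTensor_mul _ fun C _ _ f g h hfg hgh hfh => ?_
    simp only [pairHom_map]
    exact hR.1.yangBaxter _ _ _
  have hconj (z : A ⊗[ℂ] A) :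
      TensorProduct.map
        (LinearMap.mulRight ℂ (ρ v) ∘ₗ LinearMap.mulLeft ℂ (ρ (drinfeld ℂ A R)))
        (LinearMap.mulRight ℂ (ρ v) ∘ₗ LinearMap.mulLeft ℂ (ρ (drinfeld ℂ A R)))
        (Algebra.TensorProduct.map ρ ρ z)
      = Algebra.TensorProduct.map ρ ρ
        (TensorProduct.map (HopfAlgebra.antipode ℂ) (HopfAlgebra.antipode ℂ)
          (TensorProduct.map (HopfAlgebra.antipode ℂ) (HopfAlgebra.antipode ℂ) z)) := by
    have hS (a : A) : ρ (drinfeld ℂ A R) * ρ a * ρ v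
        = ρ (HopfAlgebra.antipode ℂ (HopfAlgebra.antipode ℂ a)) := by
      rw [← map_mul, ← hR.1.antipode_antipode_mul_drinfeld, map_mul, mul_assoc, huv, mul_one]
    induction z using TensorProduct.induction_on with
    | zero => simp
    | tmul a b => simp [hS]
    | add a b ha hb => simp only [map_add, ha, hb]
  have key := exists_int_of_braiding hsq hbraid
    (τ := LinearMap.trace ℂ V ∘ₗ LinearMap.mulLeft ℂ (ρ (drinfeld ℂ A R)))
    (σ := LinearMap.mulRight ℂ (ρ v) ∘ₗ LinearMap.mulLeft ℂ (ρ (drinfeld ℂ A R))) ?_ ?_ ?_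
  · simpa using key
  · intro a x
    simp only [LinearMap.comp_apply, LinearMap.mulLeft_apply, LinearMap.mulRight_apply]
    have hassoc (u y : Module.End ℂ V) : u * (x * (u * a * y)) = u * x * (u * a) * y := by
      simp only [mul_assoc]
    rw [hassoc, LinearMap.trace_mul_comm ℂ _ (ρ v), ← mul_assoc (ρ v), ← mul_assoc (ρ v), hvu,
      one_mul, LinearMap.trace_mul_comm ℂ x, mul_assoc]
  · have h := hconj R
    rw [hR.map_antipode, hR.map_antipode, map_conj] at h
    rw [map_conj, ← mul_assoc, ← TensorProduct.comm_tmul ℂ, ← flipTensor_mul, mul_assoc,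
      mul_assoc, ← mul_assoc (_ ⊗ₜ _), h]
  · rw [partialTrace_flipTensor_mul, sandwich_map, hR.sandwich_drinfeld, map_one]

end Triangular

/-- Corollary 7.4.6: for a triangular Hopf algebra `(A,R)` over `ℂ`
with Drinfeld element `u`, the trace of `u` on any finite-dimensional `A`-module is an
integer. -/
theorem trace_drinfeld_isInt
    (A : Type*) [Ring A] [HopfAlgebra ℂ A]
    (R : A ⊗[ℂ] A) (hR : IsTriangular ℂ A R)
    (V : Type*) [AddCommGroup V] [Module ℂ V] [Module A V] [IsScalarTower ℂ A V]
    [FiniteDimensional ℂ V] :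
    ∃ n : ℤ, LinearMap.trace ℂ V (smulLinearMap A (drinfeld ℂ A R) V) = (n : ℂ) := by
  exact hR.exists_int_trace (Algebra.lsmul ℂ ℂ V)
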